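/- Let K be a UFD of characteristic p > 0 and let d be a nonzero K-derivation of K[x,y] with d(x) and d(y) coprime. Let f ∈ K[x,y] \ K[x^p,y^p] be such that d* = 0, f − f_{(p)} is nonzero, belongs to K[x,y]^d, has minimal total degree among all nonzero polynomials of the form h − h_{(p)} (h ∈ K[x,y]) belonging to K[x,y]^d, and f − f_{(p)} is not divisible by any non-invertible element of K \ {0}. Then d = c·d_f for some invertible element c ∈ K. -/

import Mathlib

/-!
Write `P = d x`, `Q = d y` and `F = f - f_{(p)}`; the polynomials `F` and `f` have the same partial
derivatives. Since `P f_x + Q f_y = 0` and `P`, `Q` are coprime, `(f_x, f_y) = b (Q, -P)` for some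
polynomial `b`, that is, `d_f = b d`. Jacobian derivations have divergence zero, and
`(b d)* = b d* + d b`, so `d* = 0` gives `d b = 0`. As `b` divides a nonzero partial derivative of
`F`, its degree is less than that of `F`, and minimality of `F` forces the partial derivatives of
`b` to vanish.

Such a `b`, dividing the partial derivatives of `f`, divides `F`: by Fermat's little theorem the
power `E_i ^ (p - 1)` of the Euler operator `E_i = x_i ∂_i` is the projection onto the monomials
whose `i`-th exponent is prime to `p`, so `F` is a combination of such powers applied to `f`, and
the `E_i` are linear over the kernel of the partial derivatives. Writing `F = b h`, the polynomial
`h - h_{(p)}` is again a nonzero constant of `d`, so minimality gives `deg b = 0`. Hence `b` is an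
element of `K` dividing `F`, and therefore a unit.
-/

open MvPolynomial

/-- `f_{(p)}`: the coefficient `a₀₀ ∈ K[x^p,y^p]` in the unique representation
`f = Σ_{0≤i,j<p} a_{ij} x^i y^j` with `a_{ij} ∈ K[x^p,y^p]`; concretely it is the
sum of the monomials of `f` in which both exponents are divisible by `p`. -/
noncomputable def pPart {K : Type*} [CommRing K] (p : ℕ)
    (f : MvPolynomial (Fin 2) K) : MvPolynomial (Fin 2) K :=
  ∑ m ∈ f.support.filter (fun m => ∀ i, p ∣ m i), monomial m (coeff m f)

theorem dvd_derivation_apply {R A : Type*} [CommSemiring R] [CommSemiring A] [Algebra R A]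
    (D : Derivation R A A) {a b : A} (hb : D b = 0) (h : b ∣ a) : b ∣ D a := by
  obtain ⟨q, rfl⟩ := h
  rw [D.leibniz, hb, smul_zero, add_zero, smul_eq_mul]
  exact dvd_mul_right b (D q)

theorem natCast_pow_sub_one_eq_ite {R : Type*} [CommRing R] (p : ℕ) [Fact p.Prime] [CharP R p]
    (n : ℕ) : (n : R) ^ (p - 1) = if p ∣ n then 0 else 1 := by
  have fermat := congrArg (ZMod.castHom dvd_rfl R) (ZMod.pow_card_sub_one (n : ZMod p))
  simpa [apply_ite, ZMod.natCast_eq_zero_iff] using fermat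

theorem exists_eq_mul_of_isRelPrime {R : Type*} [CommRing R] [IsDomain R] [DecompositionMonoid R]
    {P Q u v : R} (hPQ : IsRelPrime P Q) (h : P * u + Q * v = 0) :
    ∃ b, u = b * Q ∧ v = -(b * P) := by
  rcases hPQ.ne_zero_or_ne_zero with hP | hQ
  · obtain ⟨b, rfl⟩ := hPQ.dvd_of_dvd_mul_left (z := v) ⟨-u, by linear_combination h⟩
    exact ⟨-b, mul_left_cancel₀ hP (by linear_combination h), by ring⟩
  · obtain ⟨b, rfl⟩ := hPQ.symm.dvd_of_dvd_mul_left (z := u) ⟨-v, by linear_combination h⟩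
    exact ⟨b, by ring, mul_left_cancel₀ hQ (by linear_combination h)⟩

section Euler

variable {σ R : Type*} [CommSemiring R]

/-- The Euler operator `g ↦ x_i ∂g/∂x_i`, which scales each monomial by its `i`-th exponent. -/
noncomputable def eulerDerivation (i : σ) :
    Derivation R (MvPolynomial σ R) (MvPolynomial σ R) :=
  (X i : MvPolynomial σ R) • pderiv i

theorem eulerDerivation_apply (i : σ) (g : MvPolynomial σ R) :
    eulerDerivation i g = X i * pderiv i g :=
  rfl

theorem coeff_eulerDerivation (i : σ) (g : MvPolynomial σ R) (m : σ →₀ ℕ) :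
    coeff m (eulerDerivation i g) = m i * coeff m g := by
  classical
  induction g using MvPolynomial.induction_on' with
  | monomial n a =>
    rw [eulerDerivation_apply, X_mul_pderiv_monomial, coeff_smul, coeff_monomial, nsmul_eq_mul]
    split_ifs with h <;> simp [h]
  | add g₁ g₂ h₁ h₂ => rw [map_add, coeff_add, coeff_add, h₁, h₂, mul_add]

theorem coeff_iterate_eulerDerivation (i : σ) (n : ℕ) (g : MvPolynomial σ R) (m : σ →₀ ℕ) :
    coeff m ((eulerDerivation i)^[n] g) = (m i : R) ^ n * coeff m g := by
  induction n with
  | zero => simp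
  | succ n ih => rw [Function.iterate_succ_apply', coeff_eulerDerivation, ih, pow_succ', mul_assoc]

theorem dvd_iterate_eulerDerivation {i : σ} {b g : MvPolynomial σ R} (hb : pderiv i b = 0)
    (h : b ∣ g) (n : ℕ) : b ∣ (eulerDerivation i)^[n] g :=
  have euler_b : eulerDerivation i b = 0 := by rw [eulerDerivation_apply, hb, mul_zero]
  Function.Iterate.rec (b ∣ ·) h (fun _ => dvd_derivation_apply _ euler_b) n

end Euler

section PartialDerivatives

variable {σ R : Type*}

theorem totalDegree_pderiv_lt [CommSemiring R] {i : σ} {g : MvPolynomial σ R}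
    (h : pderiv i g ≠ 0) : (pderiv i g).totalDegree < g.totalDegree := by
  obtain ⟨m, hm, hdeg⟩ :=
    Finset.exists_mem_eq_sup _ (support_nonempty.mpr h) fun m => m.sum fun _ e => e
  rw [mem_support_iff, coeff_pderiv] at hm
  calc (pderiv i g).totalDegree = m.degree := hdeg
    _ < (m + Finsupp.single i 1).degree := by simp
    _ ≤ g.totalDegree := le_totalDegree (mem_support_iff.mpr (left_ne_zero_of_mul hm))

theorem totalDegree_lt_of_dvd_pderiv [CommSemiring R] [NoZeroDivisors R] {i : σ}
    {b g : MvPolynomial σ R} (h : b ∣ pderiv i g) (hg : pderiv i g ≠ 0) :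
    b.totalDegree < g.totalDegree :=
  (totalDegree_le_of_dvd_of_isDomain h hg).trans_lt (totalDegree_pderiv_lt hg)

theorem pderiv_comm [CommRing R] (i j : σ) (g : MvPolynomial σ R) :
    pderiv i (pderiv j g) = pderiv j (pderiv i g) := by
  classical
  have commutator_eq_zero :
      (⁅pderiv i, pderiv j⁆ : Derivation R (MvPolynomial σ R) (MvPolynomial σ R)) = 0 :=
    derivation_ext fun k => by
      rw [Derivation.commutator_apply, pderiv_X, pderiv_X]
      simp [Pi.single_apply, apply_ite]
  exact sub_eq_zero.mp (DFunLike.congr_fun commutator_eq_zero g)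

variable [CommSemiring R] (d : Derivation R (MvPolynomial σ R) (MvPolynomial σ R))

theorem derivation_apply_eq_sum {g : MvPolynomial σ R} {s : Finset σ} (hs : g.vars ⊆ s) :
    d g = ∑ i ∈ s, d (X i) * pderiv i g := by
  classical
  have sum_apply (h : MvPolynomial σ R) :
      (∑ i ∈ s, d (X i) • pderiv i : Derivation R (MvPolynomial σ R) (MvPolynomial σ R)) h =
        ∑ i ∈ s, d (X i) * pderiv i h := by
    rw [← Derivation.coeFnAddMonoidHom_apply, map_sum, Finset.sum_apply]
    rfl
  rw [← sum_apply]
  refine derivation_eq_of_forall_mem_vars fun j hj => ?_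
  rw [sum_apply, Finset.sum_eq_single_of_mem j (hs hj) fun i _ hij => by
    rw [pderiv_X_of_ne hij.symm, mul_zero], pderiv_X_self, mul_one]

theorem derivation_eq_zero_of_pderiv_eq_zero {g : MvPolynomial σ R} (hg : ∀ i, pderiv i g = 0) :
    d g = 0 := by
  rw [derivation_apply_eq_sum d subset_rfl]
  exact Finset.sum_eq_zero fun i _ => by rw [hg, mul_zero]

/-- The divergence `d* = ∑ i, ∂(d x_i)/∂x_i` of a derivation of a polynomial ring. -/
noncomputable def divergence [Fintype σ] : MvPolynomial σ R :=
  ∑ i, pderiv i (d (X i))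

theorem divergence_smul [Fintype σ] (b : MvPolynomial σ R) :
    divergence (b • d) = b * divergence d + d b := by
  rw [derivation_apply_eq_sum d b.vars.subset_univ, divergence, divergence, Finset.mul_sum,
    ← Finset.sum_add_distrib]
  refine Finset.sum_congr rfl fun i _ => ?_
  rw [Derivation.smul_apply, smul_eq_mul, pderiv_mul]
  ring

end PartialDerivatives

section Jacobian

variable {R : Type*} [CommRing R]

/-- The Jacobian derivation `d_f` of `R[x, y]`, which sends `g` to the Jacobian determinant of
`(f, g)`. -/
noncomputable def jacobianDerivation (f : MvPolynomial (Fin 2) R) :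
    Derivation R (MvPolynomial (Fin 2) R) (MvPolynomial (Fin 2) R) :=
  pderiv 0 f • pderiv 1 - pderiv 1 f • pderiv 0

theorem jacobianDerivation_apply (f g : MvPolynomial (Fin 2) R) :
    jacobianDerivation f g = pderiv 0 f * pderiv 1 g - pderiv 1 f * pderiv 0 g :=
  rfl

theorem jacobianDerivation_X_zero (f : MvPolynomial (Fin 2) R) :
    jacobianDerivation f (X 0) = -pderiv 1 f := by
  simp [jacobianDerivation_apply, pderiv_X]

theorem jacobianDerivation_X_one (f : MvPolynomial (Fin 2) R) :
    jacobianDerivation f (X 1) = pderiv 0 f := by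
  simp [jacobianDerivation_apply, pderiv_X]

theorem divergence_jacobianDerivation (f : MvPolynomial (Fin 2) R) :
    divergence (jacobianDerivation f) = 0 := by
  rw [divergence, Fin.sum_univ_two, jacobianDerivation_X_zero, jacobianDerivation_X_one, map_neg,
    pderiv_comm, neg_add_cancel]

variable {d : Derivation R (MvPolynomial (Fin 2) R) (MvPolynomial (Fin 2) R)}
  {b f : MvPolynomial (Fin 2) R}

theorem dvd_pderiv_of_jacobianDerivation_eq_smul (h : jacobianDerivation f = b • d) (i : Fin 2) :
    b ∣ pderiv i f := by
  have dvd_apply (g) : b ∣ jacobianDerivation f g := ⟨d g, by rw [h]; rfl⟩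
  fin_cases i
  · exact jacobianDerivation_X_one f ▸ dvd_apply (X 1)
  · exact dvd_neg.mp (jacobianDerivation_X_zero f ▸ dvd_apply (X 0))

theorem derivation_eq_zero_of_jacobianDerivation_eq_smul (h : jacobianDerivation f = b • d)
    (hd : divergence d = 0) : d b = 0 := by
  have hdiv := divergence_smul d b
  rwa [← h, divergence_jacobianDerivation, hd, mul_zero, zero_add, eq_comm] at hdiv

theorem exists_jacobianDerivation_eq_smul [IsDomain R]
    [DecompositionMonoid (MvPolynomial (Fin 2) R)]
    (hd : IsRelPrime (d (X 0)) (d (X 1))) (hf : d f = 0) :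
    ∃ b : MvPolynomial (Fin 2) R, jacobianDerivation f = b • d := by
  rw [derivation_apply_eq_sum d f.vars.subset_univ, Fin.sum_univ_two] at hf
  obtain ⟨b, hb₀, hb₁⟩ := exists_eq_mul_of_isRelPrime hd hf
  refine ⟨b, derivation_ext (Fin.forall_fin_two.mpr ⟨?_, ?_⟩)⟩
  · rw [jacobianDerivation_X_zero, hb₁, neg_neg, Derivation.smul_apply, smul_eq_mul]
  · rw [jacobianDerivation_X_one, hb₀, Derivation.smul_apply, smul_eq_mul]

end Jacobian

section PPart

variable {K : Type*} [CommRing K] (p : ℕ)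

theorem coeff_pPart (g : MvPolynomial (Fin 2) K) (m : Fin 2 →₀ ℕ) :
    coeff m (pPart p g) = if ∀ i, p ∣ m i then coeff m g else 0 := by
  classical
  simp only [pPart, coeff_sum, coeff_monomial, Finset.sum_ite_eq', Finset.mem_filter,
    mem_support_iff]
  split_ifs <;> simp_all

theorem totalDegree_sub_pPart_le (g : MvPolynomial (Fin 2) K) :
    (g - pPart p g).totalDegree ≤ g.totalDegree := by
  refine totalDegree_le_of_support_subset fun m hm => ?_
  rw [mem_support_iff, coeff_sub, coeff_pPart] at hm
  rw [mem_support_iff]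
  intro hg
  simp [hg] at hm

variable [CharP K p]

theorem pderiv_pPart (i : Fin 2) (g : MvPolynomial (Fin 2) K) : pderiv i (pPart p g) = 0 := by
  rw [pPart, map_sum]
  refine Finset.sum_eq_zero fun m hm => ?_
  have cast_eq_zero : (m i : K) = 0 :=
    (CharP.cast_eq_zero_iff K p (m i)).mpr ((Finset.mem_filter.mp hm).2 i)
  rw [pderiv_monomial, cast_eq_zero, mul_zero, monomial_zero]

theorem pderiv_sub_pPart (i : Fin 2) (g : MvPolynomial (Fin 2) K) :
    pderiv i (g - pPart p g) = pderiv i g := by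
  rw [map_sub, pderiv_pPart, sub_zero]

theorem derivation_sub_pPart (d : Derivation K (MvPolynomial (Fin 2) K) (MvPolynomial (Fin 2) K))
    (g : MvPolynomial (Fin 2) K) : d (g - pPart p g) = d g := by
  rw [map_sub, derivation_eq_zero_of_pderiv_eq_zero d fun i => pderiv_pPart p i g, sub_zero]

variable [Fact p.Prime]

-- Inclusion–exclusion over which exponent is prime to `p`.
theorem sub_pPart_eq_iterate_eulerDerivation (g : MvPolynomial (Fin 2) K) :
    g - pPart p g = (eulerDerivation 0)^[p - 1] g + (eulerDerivation 1)^[p - 1] g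
      - (eulerDerivation 0)^[p - 1] ((eulerDerivation 1)^[p - 1] g) := by
  ext m
  simp only [coeff_sub, coeff_add, coeff_iterate_eulerDerivation, coeff_pPart,
    natCast_pow_sub_one_eq_ite p, Fin.forall_fin_two]
  split_ifs <;> simp_all

theorem dvd_sub_pPart {b g : MvPolynomial (Fin 2) K} (hb : ∀ i, pderiv i b = 0)
    (h : ∀ i, b ∣ pderiv i g) : b ∣ g - pPart p g := by
  have dvd_projection (i : Fin 2) : b ∣ (eulerDerivation i)^[p - 1] g := by
    have one_lt : 1 < p := (Fact.out : p.Prime).one_lt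
    obtain ⟨n, hn⟩ := Nat.exists_eq_succ_of_ne_zero (Nat.sub_ne_zero_of_lt one_lt)
    rw [hn, Function.iterate_succ_apply]
    exact dvd_iterate_eulerDerivation (hb i) ((h i).mul_left (X i)) n
  rw [sub_pPart_eq_iterate_eulerDerivation]
  exact dvd_sub (dvd_add (dvd_projection 0) (dvd_projection 1))
    (dvd_iterate_eulerDerivation (hb 0) (dvd_projection 1) (p - 1))

theorem sub_pPart_eq_zero_iff {g : MvPolynomial (Fin 2) K} :
    g - pPart p g = 0 ↔ ∀ i, pderiv i g = 0 := by
  refine ⟨fun h i => ?_, fun h => ?_⟩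
  · rw [← pderiv_sub_pPart p, h, map_zero]
  · exact zero_dvd_iff.mp (dvd_sub_pPart p (fun _ => map_zero _) fun i => zero_dvd_iff.mpr (h i))

end PPart

/-- `f - f_{(p)}` is a nonzero constant of `d`, of minimal total degree among the nonzero constants
of `d` of the form `h - h_{(p)}`. The condition is placed on `f` rather than on `f - f_{(p)}`. -/
structure IsMinimalConstant {K : Type*} [CommRing K] (p : ℕ)
    (d : Derivation K (MvPolynomial (Fin 2) K) (MvPolynomial (Fin 2) K))
    (f : MvPolynomial (Fin 2) K) : Prop where
  ne_zero : f - pPart p f ≠ 0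
  map_eq_zero : d (f - pPart p f) = 0
  totalDegree_le : ∀ h : MvPolynomial (Fin 2) K, h - pPart p h ≠ 0 → d (h - pPart p h) = 0 →
    (f - pPart p f).totalDegree ≤ (h - pPart p h).totalDegree

namespace IsMinimalConstant

variable {K : Type*} [CommRing K] {p : ℕ} [CharP K p]
  {d : Derivation K (MvPolynomial (Fin 2) K) (MvPolynomial (Fin 2) K)}
  {b f g : MvPolynomial (Fin 2) K}

theorem totalDegree_le_of_map_eq_zero (hf : IsMinimalConstant p d f) (hdg : d g = 0)
    (hg : g - pPart p g ≠ 0) : (f - pPart p f).totalDegree ≤ g.totalDegree :=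
  (hf.totalDegree_le g hg (by rw [derivation_sub_pPart, hdg])).trans (totalDegree_sub_pPart_le p g)

variable [Fact p.Prime]

theorem pderiv_eq_zero_of_totalDegree_lt (hf : IsMinimalConstant p d f) (hdg : d g = 0)
    (hg : g.totalDegree < (f - pPart p f).totalDegree) (i : Fin 2) : pderiv i g = 0 := by
  refine (sub_pPart_eq_zero_iff p).mp ?_ i
  by_contra hne
  exact hg.not_ge (hf.totalDegree_le_of_map_eq_zero hdg hne)

theorem totalDegree_eq_zero_of_dvd [IsDomain K] (hf : IsMinimalConstant p d f)
    (hb : ∀ i, pderiv i b = 0) (hbf : b ∣ f - pPart p f) : b.totalDegree = 0 := by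
  obtain ⟨h, hbh⟩ := hbf
  have hmul : b * h ≠ 0 := hbh ▸ hf.ne_zero
  have hdh : d h = 0 := by
    have map_mul_eq_zero : d (b * h) = 0 := hbh ▸ hf.map_eq_zero
    rw [d.leibniz, derivation_eq_zero_of_pderiv_eq_zero d hb, smul_zero, add_zero,
      smul_eq_mul] at map_mul_eq_zero
    exact (mul_eq_zero.mp map_mul_eq_zero).resolve_left (left_ne_zero_of_mul hmul)
  have hh : h - pPart p h ≠ 0 := by
    refine fun hzero => hf.ne_zero ((sub_pPart_eq_zero_iff p).mpr fun i => ?_)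
    rw [← pderiv_sub_pPart p, hbh, pderiv_mul, hb, (sub_pPart_eq_zero_iff p).mp hzero, zero_mul,
      mul_zero, add_zero]
  have hdeg := hf.totalDegree_le_of_map_eq_zero hdh hh
  rw [hbh, totalDegree_mul_of_isDomain (left_ne_zero_of_mul hmul) (right_ne_zero_of_mul hmul)]
    at hdeg
  omega

end IsMinimalConstant

theorem proposition1_4_implies_2_general {K : Type*} [CommRing K] [IsDomain K]
    [DecompositionMonoid (MvPolynomial (Fin 2) K)] {p : ℕ} [Fact p.Prime] [CharP K p]
    {d : Derivation K (MvPolynomial (Fin 2) K) (MvPolynomial (Fin 2) K)}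
    (hcop : IsRelPrime (d (X 0)) (d (X 1))) (hdiv : divergence d = 0)
    {f : MvPolynomial (Fin 2) K} (hf : IsMinimalConstant p d f)
    (hprim : ∀ k : K, C k ∣ f - pPart p f → IsUnit k) :
    ∃ c : K, IsUnit c ∧ d = c • jacobianDerivation f := by
  have hdf : d f = 0 := derivation_sub_pPart p d f ▸ hf.map_eq_zero
  obtain ⟨b, hb⟩ := exists_jacobianDerivation_eq_smul hcop hdf
  have dvd_pderiv := dvd_pderiv_of_jacobianDerivation_eq_smul hb
  have hdb : d b = 0 := derivation_eq_zero_of_jacobianDerivation_eq_smul hb hdiv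
  obtain ⟨i, hi⟩ : ∃ i, pderiv i f ≠ 0 :=
    not_forall.mp fun h => hf.ne_zero ((sub_pPart_eq_zero_iff p).mpr h)
  rw [← pderiv_sub_pPart p] at hi
  have totalDegree_lt : b.totalDegree < (f - pPart p f).totalDegree :=
    totalDegree_lt_of_dvd_pderiv (by rw [pderiv_sub_pPart]; exact dvd_pderiv i) hi
  have pderiv_b : ∀ i, pderiv i b = 0 := hf.pderiv_eq_zero_of_totalDegree_lt hdb totalDegree_lt
  have b_dvd : b ∣ f - pPart p f := dvd_sub_pPart p pderiv_b dvd_pderiv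
  obtain ⟨k, rfl⟩ : ∃ k, b = C k :=
    ⟨_, totalDegree_eq_zero_iff_eq_C.mp (hf.totalDegree_eq_zero_of_dvd pderiv_b b_dvd)⟩
  obtain ⟨u, rfl⟩ := hprim k b_dvd
  refine ⟨↑u⁻¹, u⁻¹.isUnit, ?_⟩
  rw [hb, ← algebraMap_eq, algebraMap_smul, smul_smul, Units.inv_mul, one_smul]

/-- (4) ⇒ (2) of Proposition 1.  `d` a nonzero `K`-derivation of
`K[x,y]` with `d(x), d(y)` coprime, `f ∈ K[x,y] \ K[x^p,y^p]`, `d* = 0`,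
`f − f_{(p)}` a nonzero constant of `d` of minimal total degree among nonzero
constants of the form `h − h_{(p)}`, and `f − f_{(p)}` not divisible by any
noninvertible nonzero element of `K`.  Then `d = c·d_f` for an invertible `c ∈ K`. -/
theorem proposition1_4_implies_2
    {K : Type*} [CommRing K] [IsDomain K] [UniqueFactorizationMonoid K]
    (p : ℕ) [Fact p.Prime] [CharP K p]
    (d : Derivation K (MvPolynomial (Fin 2) K) (MvPolynomial (Fin 2) K))
    (hd : d ≠ 0)
    (hcop : ∀ q : MvPolynomial (Fin 2) K, q ∣ d (X 0) → q ∣ d (X 1) → IsUnit q)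
    (f : MvPolynomial (Fin 2) K)
    (hf : f ∉ Algebra.adjoin K ({X 0 ^ p, X 1 ^ p} : Set (MvPolynomial (Fin 2) K)))
    (hdiv : pderiv (0 : Fin 2) (d (X 0)) + pderiv (1 : Fin 2) (d (X 1)) = 0)
    (hf₁ : f - pPart p f ≠ 0)
    (hf₂ : d (f - pPart p f) = 0)
    (hfmin : ∀ h : MvPolynomial (Fin 2) K, h - pPart p h ≠ 0 → d (h - pPart p h) = 0 →
      (f - pPart p f).totalDegree ≤ (h - pPart p h).totalDegree)
    (hfprim : ∀ k : K, k ≠ 0 → C k ∣ (f - pPart p f) → IsUnit k) :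
    ∃ c : K, IsUnit c ∧ ∀ g,
      d g = C c * (pderiv (0 : Fin 2) f * pderiv (1 : Fin 2) g
                 - pderiv (1 : Fin 2) f * pderiv (0 : Fin 2) g) := by
  obtain ⟨c, hc, hdc⟩ := proposition1_4_implies_2_general (fun q => hcop q)
    (by rwa [divergence, Fin.sum_univ_two]) ⟨hf₁, hf₂, hfmin⟩
    fun k hk => hfprim k (by rintro rfl; exact hf₁ (by simpa using hk)) hk
  exact ⟨c, hc, fun g => by
    rw [← smul_eq_C_mul, ← jacobianDerivation_apply, ← Derivation.smul_apply, ← hdc]⟩
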